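/- If M is a good m×n joint probability matrix, A is an m×m' stochastic matrix, and B is an n×n' stochastic matrix, then AᵀMB is a good m'×n' joint probability matrix. -/

import Mathlib

open scoped BigOperators Classical

noncomputable section

/-- Probability of an event `E` under a distribution `μ` on a finite sample space `Ω`. -/
def pr {Ω : Type} [Fintype Ω] (μ : Ω → ℝ) (E : Ω → Prop) : ℝ :=
  ∑ ω, if E ω then μ ω else 0

/-- `μ` is a probability distribution on the finite space `Ω`. -/
def IsProb {Ω : Type} [Fintype Ω] (μ : Ω → ℝ) : Prop :=
  (∀ ω, 0 ≤ μ ω) ∧ ∑ ω, μ ω = 1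

/-- Shannon entropy (base 2) of a random variable `α` on a finite probability space. -/
def ent {Ω A : Type} [Fintype Ω] (μ : Ω → ℝ) (α : Ω → A) : ℝ :=
  -∑ a ∈ Finset.univ.image α,
      pr μ (fun ω => α ω = a) * Real.logb 2 (pr μ (fun ω => α ω = a))

/-- Conditional entropy `H(α | β)`. -/
def condEnt {Ω A B : Type} [Fintype Ω] (μ : Ω → ℝ) (α : Ω → A) (β : Ω → B) : ℝ :=
  ent μ (fun ω => (α ω, β ω)) - ent μ β

/-- Mutual information `I(α : β)`. -/
def mutualInfo {Ω A B : Type} [Fintype Ω] (μ : Ω → ℝ) (α : Ω → A) (β : Ω → B) : ℝ :=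
  ent μ α + ent μ β - ent μ (fun ω => (α ω, β ω))

/-- Conditional mutual information `I(α : β | γ)`. -/
def condMutualInfo {Ω A B C : Type} [Fintype Ω] (μ : Ω → ℝ)
    (α : Ω → A) (β : Ω → B) (γ : Ω → C) : ℝ :=
  condEnt μ α γ + condEnt μ β γ - condEnt μ (fun ω => (α ω, β ω)) γ

/-- Independence of two random variables. -/
def Indep {Ω A B : Type} [Fintype Ω] (μ : Ω → ℝ) (α : Ω → A) (β : Ω → B) : Prop :=
  ∀ (a : A) (b : B),
    pr μ (fun ω => α ω = a ∧ β ω = b) =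
      pr μ (fun ω => α ω = a) * pr μ (fun ω => β ω = b)

/-- Auxiliary form of "conditionally independent of order `k`" (explicit `Fintype`):
`α` and `β` are conditionally independent of order `0` if they are independent,
and of order `k + 1` if on some finite probability space there are random variables
`α₀, β₀, α*, β*` such that `(α₀, β₀)` has the same joint distribution as `(α, β)`,
`I(α₀ : β₀ | α*) = 0`, `I(α₀ : β₀ | β*) = 0`, and `α*, β*` are conditionally
independent of order `k`. -/
def CondIndepOrderAux : ℕ → (Ω A B : Type) → Fintype Ω → (Ω → ℝ) → (Ω → A) → (Ω → B) → Prop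
  | 0, _Ω, _A, _B, iΩ, μ, α, β => @Indep _ _ _ iΩ μ α β
  | k+1, _Ω, A, B, iΩ, μ, α, β =>
      ∃ (Ω' A' B' : Type) (iΩ' : Fintype Ω') (μ' : Ω' → ℝ)
        (α₀ : Ω' → A) (β₀ : Ω' → B) (αs : Ω' → A') (βs : Ω' → B'),
        @IsProb _ iΩ' μ' ∧
        (∀ (a : A) (b : B),
          @pr _ iΩ' μ' (fun ω => α₀ ω = a ∧ β₀ ω = b) =
            @pr _ iΩ μ (fun ω => α ω = a ∧ β ω = b)) ∧
        @condMutualInfo _ _ _ _ iΩ' μ' α₀ β₀ αs = 0 ∧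
        @condMutualInfo _ _ _ _ iΩ' μ' α₀ β₀ βs = 0 ∧
        CondIndepOrderAux k Ω' A' B' iΩ' μ' αs βs

/-- Random variables `α` and `β` on a finite probability space are
conditionally independent of order `k`. -/
def CondIndepOrder {Ω A B : Type} [iΩ : Fintype Ω]
    (μ : Ω → ℝ) (α : Ω → A) (β : Ω → B) (k : ℕ) : Prop :=
  CondIndepOrderAux k Ω A B iΩ μ α β

/-- An `m × n` joint probability matrix: nonnegative entries summing to `1`. -/
def IsJointProbMatrix {m n : ℕ} (M : Matrix (Fin m) (Fin n) ℝ) : Prop :=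
  (∀ i j, 0 ≤ M i j) ∧ ∑ i, ∑ j, M i j = 1

/-- `M` is the joint probability matrix of the pair `(α, β)`. -/
def IsJointMatrixOf {Ω : Type} [Fintype Ω] {m n : ℕ} (M : Matrix (Fin m) (Fin n) ℝ)
    (μ : Ω → ℝ) (α : Ω → Fin m) (β : Ω → Fin n) : Prop :=
  ∀ i j, M i j = pr μ (fun ω => α ω = i ∧ β ω = j)

/-- `M` is a block matrix: rows and columns can be partitioned into two nonempty
parts so that the two diagonal blocks each contain a nonzero element and all
entries outside the diagonal blocks vanish. -/
def IsBlockMatrix {m n : ℕ} (M : Matrix (Fin m) (Fin n) ℝ) : Prop :=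
  ∃ (I₁ : Finset (Fin m)) (J₁ : Finset (Fin n)),
    I₁.Nonempty ∧ I₁ᶜ.Nonempty ∧ J₁.Nonempty ∧ J₁ᶜ.Nonempty ∧
    (∃ i ∈ I₁, ∃ j ∈ J₁, M i j ≠ 0) ∧
    (∃ i ∈ I₁ᶜ, ∃ j ∈ J₁ᶜ, M i j ≠ 0) ∧
    (∀ i j, ((i ∈ I₁ ∧ j ∈ J₁ᶜ) ∨ (i ∈ I₁ᶜ ∧ j ∈ J₁)) → M i j = 0)

/-- `M` is a good matrix: the joint probability matrix of some pair of
conditionally independent random variables (of some finite order). -/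
def IsGoodMatrix {m n : ℕ} (M : Matrix (Fin m) (Fin n) ℝ) : Prop :=
  ∃ (Ω : Type) (iΩ : Fintype Ω) (μ : Ω → ℝ) (α : Ω → Fin m) (β : Ω → Fin n) (k : ℕ),
    @IsProb _ iΩ μ ∧ @IsJointMatrixOf _ iΩ _ _ M μ α β ∧
    @CondIndepOrder _ _ _ iΩ μ α β k

/-- A stochastic matrix: nonnegative entries, all row sums equal to `1`. -/
def IsStochastic {m n : ℕ} (A : Matrix (Fin m) (Fin n) ℝ) : Prop :=
  (∀ i j, 0 ≤ A i j) ∧ ∀ i, ∑ j, A i j = 1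

/-- The matrix `D_ε`: diagonal entries `1/2 - ε`, off-diagonal entries `ε`. -/
def Dmat (ε : ℝ) : Matrix (Fin 2) (Fin 2) ℝ :=
  fun i j => if i = j then 1/2 - ε else ε

/-- The distribution of `n` i.i.d. trials, each distributed according to `μ`. -/
def iidMeasure {Ω : Type} [Fintype Ω] (μ : Ω → ℝ) (n : ℕ) : (Fin n → Ω) → ℝ :=
  fun ωv => ∏ i, μ (ωv i)

/-- The sequence of `n` coordinatewise copies of a random variable. -/
def iidRV {Ω A : Type} (α : Ω → A) (n : ℕ) : (Fin n → Ω) → (Fin n → A) :=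
  fun ωv i => α (ωv i)

/-- `(u, v, w)` belongs to the rate region of the pair `(α, β)`. -/
def InRateRegion {Ω A B : Type} [Fintype Ω] (μ : Ω → ℝ) (α : Ω → A) (β : Ω → B)
    (u v w : ℝ) : Prop :=
  0 ≤ u ∧ 0 ≤ v ∧ 0 ≤ w ∧
  ∀ ε > (0:ℝ), ∀ δ > (0:ℝ), ∃ n₀ : ℕ, ∀ n ≥ n₀,
    ∃ (t : (Fin n → A) × (Fin n → B) → (Fin ⌊(u + δ) * n⌋₊ → Bool))
      (f : (Fin n → A) × (Fin n → B) → (Fin ⌊(v + δ) * n⌋₊ → Bool))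
      (g : (Fin n → A) × (Fin n → B) → (Fin ⌊(w + δ) * n⌋₊ → Bool))
      (r : (Fin ⌊(u + δ) * n⌋₊ → Bool) × (Fin ⌊(v + δ) * n⌋₊ → Bool) → (Fin n → A))
      (s : (Fin ⌊(u + δ) * n⌋₊ → Bool) × (Fin ⌊(w + δ) * n⌋₊ → Bool) → (Fin n → B)),
      pr (iidMeasure μ n) (fun ωv =>
          r (t (iidRV α n ωv, iidRV β n ωv), f (iidRV α n ωv, iidRV β n ωv)) = iidRV α n ωv)
        > 1 - ε ∧
      pr (iidMeasure μ n) (fun ωv =>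
          s (t (iidRV α n ωv, iidRV β n ωv), g (iidRV α n ωv, iidRV β n ωv)) = iidRV β n ωv)
        > 1 - ε

/-- The support of a matrix: the set of positions of its nonzero entries. -/
def msupport {m n : ℕ} (M : Matrix (Fin m) (Fin n) ℝ) : Set (Fin m × Fin n) :=
  {p | M p.1 p.2 ≠ 0}

/-- An r-matrix: nonnegative entries and rectangular support. -/
def IsRMatrix {m n : ℕ} (M : Matrix (Fin m) (Fin n) ℝ) : Prop :=
  (∀ i j, 0 ≤ M i j) ∧ ∃ (A : Set (Fin m)) (B : Set (Fin n)), msupport M = A ×ˢ B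

/-- An r-decomposition of `M`: an expression of `M` as a finite sum of r-matrices
such that the supports of consecutive summands intersect. -/
def IsRDecomposition {m n : ℕ} (M : Matrix (Fin m) (Fin n) ℝ)
    (l : ℕ) (Ms : Fin l → Matrix (Fin m) (Fin n) ℝ) : Prop :=
  M = ∑ i, Ms i ∧ (∀ i, IsRMatrix (Ms i)) ∧
  ∀ (i : ℕ) (h : i + 1 < l),
    (msupport (Ms ⟨i, Nat.lt_of_succ_lt h⟩) ∩ msupport (Ms ⟨i + 1, h⟩)).Nonempty

end

/-!
Pass `α` through the channel `A` and `β` through the channel `B`, with independent noise: the two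
outputs have joint matrix `AᵀMB`. The same noise can be attached to every pair occurring in a
chain of conditional independences. Given `α*`, the outputs are functions of the conditionally
independent `α₀`, `β₀` and of fresh noise, so they stay conditionally independent, while the joint
law of `(α*, β*)` is untouched. Since the definition speaks about `I(α₀ : β₀ | α*) = 0`, this uses
that conditional mutual information vanishes exactly when the joint law factorizes, which is the
equality case of Gibbs' inequality.
-/

open Finset Real InformationTheory

section Gibbs

variable {ι : Type*} {s : Finset ι} {p q : ι → ℝ}

theorem mul_klFun_div {x y : ℝ} (h : y = 0 → x = 0) :
    y * klFun (x / y) = x * log (x / y) + (y - x) := by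
  rcases eq_or_ne y 0 with hy | hy
  · simp [hy, h hy]
  · rw [klFun]
    field_simp
    ring

theorem sum_mul_log_div_eq_zero_iff (hp : ∀ i ∈ s, 0 ≤ p i) (hq : ∀ i ∈ s, 0 ≤ q i)
    (hpq : ∀ i ∈ s, q i = 0 → p i = 0) (hsum : ∑ i ∈ s, p i = ∑ i ∈ s, q i) :
    ∑ i ∈ s, p i * log (p i / q i) = 0 ↔ ∀ i ∈ s, p i = q i := by
  have hdiv : ∀ i ∈ s, 0 ≤ p i / q i := fun i hi => div_nonneg (hp i hi) (hq i hi)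
  have hsum_klFun :
      ∑ i ∈ s, p i * log (p i / q i) = ∑ i ∈ s, q i * klFun (p i / q i) := by
    rw [sum_congr rfl fun i hi => mul_klFun_div (hpq i hi), sum_add_distrib, sum_sub_distrib,
      hsum, sub_self, add_zero]
  rw [hsum_klFun,
    sum_eq_zero_iff_of_nonneg fun i hi => mul_nonneg (hq i hi) (klFun_nonneg (hdiv i hi))]
  refine forall₂_congr fun i hi => ?_
  rw [mul_eq_zero, klFun_eq_zero_iff (hdiv i hi)]
  rcases eq_or_ne (q i) 0 with hqi | hqi
  · simp [hqi, hpq i hi hqi]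
  · simp [hqi, div_eq_one_iff_eq]

end Gibbs

section Probability

variable {Ω A B : Type} [Fintype Ω] {μ : Ω → ℝ} {E F : Ω → Prop}

theorem pr_nonneg (hμ : ∀ ω, 0 ≤ μ ω) : 0 ≤ pr μ E :=
  sum_nonneg fun ω _ => by split_ifs <;> simp [hμ ω]

theorem pr_mono (hμ : ∀ ω, 0 ≤ μ ω) (hEF : ∀ ω, E ω → F ω) : pr μ E ≤ pr μ F := by
  refine sum_le_sum fun ω _ => ?_
  by_cases hE : E ω
  · simp [hE, hEF ω hE]
  · rw [if_neg hE]
    split_ifs <;> simp [hμ ω]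

theorem pr_eq_zero_of_imp (hμ : ∀ ω, 0 ≤ μ ω) (hEF : ∀ ω, E ω → F ω) (hF : pr μ F = 0) :
    pr μ E = 0 :=
  le_antisymm (hF ▸ pr_mono hμ hEF) (pr_nonneg hμ)

theorem pr_pos (hμ : ∀ ω, 0 ≤ μ ω) {ω : Ω} (hω : 0 < μ ω) (hE : E ω) : 0 < pr μ E :=
  sum_pos' (fun ω _ => by split_ifs <;> simp [hμ ω]) ⟨ω, mem_univ ω, by simpa [hE] using hω⟩

theorem pr_true : pr μ (fun _ => True) = ∑ ω, μ ω := by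
  simp [pr]

theorem pr_singleton (ω : Ω) : pr μ (fun ω' => ω' = ω) = μ ω := by
  simp [pr]

variable {s : Finset A} {X : Ω → A}

theorem sum_pr_and_mul (hs : ∀ ω, X ω ∈ s) (f : A → ℝ) :
    ∑ a ∈ s, pr μ (fun ω => X ω = a ∧ E ω) * f a = ∑ ω, if E ω then μ ω * f (X ω) else 0 := by
  simp only [pr, sum_mul]
  rw [sum_comm]
  refine sum_congr rfl fun ω _ => ?_
  split_ifs with hE <;> simp [hE, hs ω]

theorem sum_pr_and (hs : ∀ ω, X ω ∈ s) :
    ∑ a ∈ s, pr μ (fun ω => X ω = a ∧ E ω) = pr μ E := by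
  simpa [pr] using sum_pr_and_mul (μ := μ) (E := E) hs 1

theorem sum_pr_mul (hs : ∀ ω, X ω ∈ s) (f : A → ℝ) :
    ∑ a ∈ s, pr μ (fun ω => X ω = a) * f a = ∑ ω, μ ω * f (X ω) := by
  simpa using sum_pr_and_mul (μ := μ) (E := fun _ => True) hs f

theorem sum_pr (hs : ∀ ω, X ω ∈ s) : ∑ a ∈ s, pr μ (fun ω => X ω = a) = ∑ ω, μ ω := by
  simpa using sum_pr_mul (μ := μ) hs 1

variable {Ω' : Type} [Fintype Ω'] {μ' : Ω' → ℝ} {α : Ω → A} {β : Ω → B} {α' : Ω' → A} {β' : Ω' → B}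

theorem sum_mul_eq_of_joint_eq
    (h : ∀ a b, pr μ' (fun ω => α' ω = a ∧ β' ω = b) = pr μ (fun ω => α ω = a ∧ β ω = b))
    (f : A → B → ℝ) : ∑ ω, μ' ω * f (α' ω) (β' ω) = ∑ ω, μ ω * f (α ω) (β ω) := by
  let s : Finset (A × B) :=
    univ.image (fun ω => (α ω, β ω)) ∪ univ.image (fun ω => (α' ω, β' ω))
  have hs : ∀ ω, (α ω, β ω) ∈ s := fun ω => mem_union_left _ (mem_image_of_mem _ (mem_univ ω))
  have hs' : ∀ ω, (α' ω, β' ω) ∈ s := fun ω => mem_union_right _ (mem_image_of_mem _ (mem_univ ω))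
  rw [← sum_pr_mul hs fun x => f x.1 x.2, ← sum_pr_mul hs' fun x => f x.1 x.2]
  simp only [Prod.ext_iff, h]

theorem pr_eq_of_joint_eq
    (h : ∀ a b, pr μ' (fun ω => α' ω = a ∧ β' ω = b) = pr μ (fun ω => α ω = a ∧ β ω = b))
    (R : A → B → Prop) : pr μ' (fun ω => R (α' ω) (β' ω)) = pr μ (fun ω => R (α ω) (β ω)) := by
  simpa [pr] using sum_mul_eq_of_joint_eq h fun a b => if R a b then 1 else 0

end Probability

section CondIndep

variable {Ω A B C : Type} [Fintype Ω] {μ : Ω → ℝ} {α : Ω → A} {β : Ω → B} {γ : Ω → C}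

/-- Conditional independence of `α` and `β` given `γ`, as factorization of the joint law; the
denominators are cleared so that nothing is divided by the probability of a null event. -/
def CondIndep (μ : Ω → ℝ) (α : Ω → A) (β : Ω → B) (γ : Ω → C) : Prop :=
  ∀ a b c, pr μ (fun ω => α ω = a ∧ β ω = b ∧ γ ω = c) * pr μ (fun ω => γ ω = c) =
    pr μ (fun ω => α ω = a ∧ γ ω = c) * pr μ (fun ω => β ω = b ∧ γ ω = c)

/-- The law of the triple `(α, β, γ)` in which `α` and `β` are made conditionally independent given
`γ`, keeping the laws of `(α, γ)` and `(β, γ)`. At values of `γ` of probability zero, division by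
zero gives the correct value `0`. -/
noncomputable def condProdLaw (μ : Ω → ℝ) (α : Ω → A) (β : Ω → B) (γ : Ω → C)
    (x : (A × B) × C) : ℝ :=
  pr μ (fun ω => α ω = x.1.1 ∧ γ ω = x.2) * pr μ (fun ω => β ω = x.1.2 ∧ γ ω = x.2) /
    pr μ (fun ω => γ ω = x.2)

/-- A finite box containing all values of the triple `(α, β, γ)`, over which sums of functions of
the triple are taken. -/
noncomputable def valueBox (α : Ω → A) (β : Ω → B) (γ : Ω → C) : Finset ((A × B) × C) :=
  (univ.image α ×ˢ univ.image β) ×ˢ univ.image γ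

theorem mem_valueBox (ω : Ω) : ((α ω, β ω), γ ω) ∈ valueBox α β γ := by
  simp [valueBox]

theorem condProdLaw_nonneg (hμ : ∀ ω, 0 ≤ μ ω) (x : (A × B) × C) :
    0 ≤ condProdLaw μ α β γ x :=
  div_nonneg (mul_nonneg (pr_nonneg hμ) (pr_nonneg hμ)) (pr_nonneg hμ)

theorem sum_condProdLaw : ∑ x ∈ valueBox α β γ, condProdLaw μ α β γ x = ∑ ω, μ ω := by
  have hmem {D : Type} (δ : Ω → D) (ω : Ω) : δ ω ∈ univ.image δ :=
    mem_image_of_mem δ (mem_univ ω)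
  rw [valueBox, sum_product_right, ← sum_pr (hmem γ)]
  refine sum_congr rfl fun c _ => ?_
  simp only [condProdLaw]
  rw [← sum_div, sum_product]
  dsimp only
  rw [← sum_mul_sum, sum_pr_and (hmem α), sum_pr_and (hmem β), mul_self_div_self]

theorem pr_triple_eq_zero_of_condProdLaw_eq_zero (hμ : ∀ ω, 0 ≤ μ ω) {x : (A × B) × C}
    (hx : condProdLaw μ α β γ x = 0) : pr μ (fun ω => ((α ω, β ω), γ ω) = x) = 0 := by
  obtain ⟨⟨a, b⟩, c⟩ := x
  simp only [condProdLaw, div_eq_zero_iff, mul_eq_zero] at hx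
  rcases hx with (hx | hx) | hx <;> exact pr_eq_zero_of_imp hμ (by simp +contextual) hx

theorem condIndep_iff_forall_mem_valueBox (hμ : ∀ ω, 0 ≤ μ ω) :
    CondIndep μ α β γ ↔
      ∀ x ∈ valueBox α β γ, pr μ (fun ω => ((α ω, β ω), γ ω) = x) = condProdLaw μ α β γ x := by
  simp only [CondIndep, Prod.forall, Prod.mk.injEq, and_assoc, condProdLaw]
  refine forall₃_congr fun a b c => ?_
  by_cases hx : ((a, b), c) ∈ valueBox α β γ
  · rcases eq_or_ne (pr μ fun ω => γ ω = c) 0 with hc | hc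
    · have hac : pr μ (fun ω => α ω = a ∧ γ ω = c) = 0 :=
        pr_eq_zero_of_imp hμ (fun _ h => h.2) hc
      have habc : pr μ (fun ω => α ω = a ∧ β ω = b ∧ γ ω = c) = 0 :=
        pr_eq_zero_of_imp hμ (fun _ h => h.2.2) hc
      simp [hc, hac, habc]
    · simp [hx, eq_div_iff hc]
  · simp only [hx, false_imp_iff, iff_true]
    have hnot : a ∉ univ.image α ∨ b ∉ univ.image β ∨ c ∉ univ.image γ := by
      simpa only [valueBox, mem_product, not_and_or, or_assoc] using hx
    simp only [mem_image, mem_univ, true_and, not_exists] at hnot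
    rcases hnot with h | h | h <;> simp [pr, h]

theorem ent_eq_neg_sum (X : Ω → A) :
    ent μ X = -∑ ω, μ ω * logb 2 (pr μ fun ω' => X ω' = X ω) := by
  rw [ent, sum_pr_mul (fun ω => mem_image_of_mem X (mem_univ ω)) fun a =>
    logb 2 (pr μ fun ω => X ω = a)]

theorem condMutualInfo_mul_log_two (hμ : ∀ ω, 0 ≤ μ ω) :
    condMutualInfo μ α β γ * log 2 =
      ∑ x ∈ valueBox α β γ, pr μ (fun ω => ((α ω, β ω), γ ω) = x) *
        log (pr μ (fun ω => ((α ω, β ω), γ ω) = x) / condProdLaw μ α β γ x) := by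
  rw [sum_pr_mul mem_valueBox fun x =>
    log (pr μ (fun ω => ((α ω, β ω), γ ω) = x) / condProdLaw μ α β γ x)]
  simp only [condMutualInfo, condEnt, ent_eq_neg_sum, ← sum_neg_distrib, ← sum_sub_distrib,
    ← sum_add_distrib, sum_mul]
  refine sum_congr rfl fun ω _ => ?_
  rcases (hμ ω).eq_or_lt with hω | hω
  · simp [← hω]
  have hγ : 0 < pr μ fun ω' => γ ω' = γ ω := pr_pos hμ hω rfl
  have hαγ : 0 < pr μ fun ω' => α ω' = α ω ∧ γ ω' = γ ω := pr_pos hμ hω ⟨rfl, rfl⟩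
  have hβγ : 0 < pr μ fun ω' => β ω' = β ω ∧ γ ω' = γ ω := pr_pos hμ hω ⟨rfl, rfl⟩
  have hαβγ : 0 < pr μ fun ω' => (α ω' = α ω ∧ β ω' = β ω) ∧ γ ω' = γ ω :=
    pr_pos hμ hω ⟨⟨rfl, rfl⟩, rfl⟩
  have hlog : log 2 ≠ 0 := (log_pos one_lt_two).ne'
  simp only [condProdLaw, Prod.mk.injEq, logb]
  rw [log_div hαβγ.ne' (by positivity), log_div (by positivity) hγ.ne', log_mul hαγ.ne' hβγ.ne']
  field_simp
  ring

theorem condMutualInfo_eq_zero_iff (hμ : ∀ ω, 0 ≤ μ ω) :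
    condMutualInfo μ α β γ = 0 ↔ CondIndep μ α β γ := by
  rw [condIndep_iff_forall_mem_valueBox hμ,
    ← sum_mul_log_div_eq_zero_iff (fun _ _ => pr_nonneg hμ) (fun _ _ => condProdLaw_nonneg hμ _)
      (fun _ _ => pr_triple_eq_zero_of_condProdLaw_eq_zero hμ)
      (by rw [sum_pr mem_valueBox, sum_condProdLaw]),
    ← condMutualInfo_mul_log_two hμ, mul_eq_zero, or_iff_left (log_pos one_lt_two).ne']

theorem indep_iff_condIndep_const (hμ : ∑ ω, μ ω = 1) :
    Indep μ α β ↔ CondIndep μ α β (fun _ => ()) := by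
  simp [Indep, CondIndep, pr_true, hμ]

theorem CondIndep.sum_mul_mul_pr (h : CondIndep μ α β γ) (f : A → ℝ) (g : B → ℝ) (c : C) :
    (∑ ω, if γ ω = c then μ ω * (f (α ω) * g (β ω)) else 0) * pr μ (fun ω => γ ω = c) =
      (∑ ω, if γ ω = c then μ ω * f (α ω) else 0) *
        ∑ ω, if γ ω = c then μ ω * g (β ω) else 0 := by
  have hα (ω : Ω) : α ω ∈ univ.image α := mem_image_of_mem α (mem_univ ω)
  have hβ (ω : Ω) : β ω ∈ univ.image β := mem_image_of_mem β (mem_univ ω)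
  have hαβ (ω : Ω) : (α ω, β ω) ∈ univ.image α ×ˢ univ.image β := mk_mem_product (hα ω) (hβ ω)
  rw [← sum_pr_and_mul hαβ fun x => f x.1 * g x.2, ← sum_pr_and_mul hα, ← sum_pr_and_mul hβ,
    sum_mul_sum, ← sum_product', sum_mul]
  refine sum_congr rfl fun x _ => ?_
  simp only [Prod.ext_iff, and_assoc]
  linear_combination (f x.1 * g x.2) * h x.1 x.2 c

end CondIndep

theorem Indep.congr {Ω Ω' A B : Type} [Fintype Ω] [Fintype Ω'] {μ : Ω → ℝ} {μ' : Ω' → ℝ}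
    {α : Ω → A} {β : Ω → B} {α' : Ω' → A} {β' : Ω' → B} (hi : Indep μ α β)
    (h : ∀ a b, pr μ' (fun ω => α' ω = a ∧ β' ω = b) = pr μ (fun ω => α ω = a ∧ β ω = b)) :
    Indep μ' α' β' := fun a b => by
  rw [h, hi a b, pr_eq_of_joint_eq h fun x _ => x = a, pr_eq_of_joint_eq h fun _ y => y = b]

theorem CondIndepOrder.congr {Ω Ω' A B : Type} [Fintype Ω] [Fintype Ω'] {μ : Ω → ℝ} {μ' : Ω' → ℝ}
    {α : Ω → A} {β : Ω → B} {α' : Ω' → A} {β' : Ω' → B} {k : ℕ} (hk : CondIndepOrder μ α β k)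
    (h : ∀ a b, pr μ' (fun ω => α' ω = a ∧ β' ω = b) = pr μ (fun ω => α ω = a ∧ β ω = b)) :
    CondIndepOrder μ' α' β' k := by
  cases k with
  | zero => exact Indep.congr hk h
  | succ k =>
    obtain ⟨Ω₀, A₀, B₀, iΩ₀, μ₀, α₀, β₀, αs, βs, hμ₀, hjoint, hrest⟩ := hk
    exact ⟨Ω₀, A₀, B₀, iΩ₀, μ₀, α₀, β₀, αs, βs, hμ₀,
      fun a b => (hjoint a b).trans (h a b).symm, hrest⟩

section Channel

variable {Ω A B C A' B' : Type} [Fintype Ω] [Fintype A'] [Fintype B'] {μ : Ω → ℝ}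
  {α : Ω → A} {β : Ω → B} {γ : Ω → C} {κ : A → A' → ℝ} {η : B → B' → ℝ}

/-- The law of `(ω, x, y)` where `ω` has law `μ` and, given `ω`, the channel outputs `x` and `y` are
drawn independently from `κ (α ω)` and `η (β ω)`. A channel is encoded as a family of weights,
which is a stochastic matrix when each member satisfies `IsProb`. -/
def channelLaw (μ : Ω → ℝ) (α : Ω → A) (β : Ω → B) (κ : A → A' → ℝ) (η : B → B' → ℝ) :
    Ω × A' × B' → ℝ :=
  fun t => μ t.1 * (κ (α t.1) t.2.1 * η (β t.1) t.2.2)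

theorem pr_channelLaw (P : A' → Prop) (Q : B' → Prop) (E : Ω → Prop) :
    pr (channelLaw μ α β κ η) (fun t => P t.2.1 ∧ Q t.2.2 ∧ E t.1) =
      ∑ ω, if E ω then μ ω * (pr (κ (α ω)) P * pr (η (β ω)) Q) else 0 := by
  simp only [pr, channelLaw, Fintype.sum_prod_type]
  refine sum_congr rfl fun ω _ => ?_
  split_ifs with hE
  · simp only [hE, and_true, sum_mul_sum, ite_zero_mul_ite_zero]
    simp only [mul_sum, mul_ite, mul_zero]
  · simp [hE]

theorem pr_channelLaw_outputs_and_input (i : A') (j : B') (E : Ω → Prop) :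
    pr (channelLaw μ α β κ η) (fun t => t.2.1 = i ∧ t.2.2 = j ∧ E t.1) =
      ∑ ω, if E ω then μ ω * (κ (α ω) i * η (β ω) j) else 0 := by
  rw [pr_channelLaw (· = i) (· = j)]
  simp only [pr_singleton]

theorem pr_channelLaw_outputs (i : A') (j : B') :
    pr (channelLaw μ α β κ η) (fun t => t.2.1 = i ∧ t.2.2 = j) =
      ∑ ω, μ ω * (κ (α ω) i * η (β ω) j) := by
  simpa using
    pr_channelLaw_outputs_and_input (μ := μ) (α := α) (β := β) (κ := κ) (η := η) i j fun _ => True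

theorem pr_channelLaw_left_and_input (hη : ∀ b, ∑ j, η b j = 1) (i : A') (E : Ω → Prop) :
    pr (channelLaw μ α β κ η) (fun t => t.2.1 = i ∧ E t.1) =
      ∑ ω, if E ω then μ ω * κ (α ω) i else 0 := by
  simpa [pr_true, pr_singleton, hη] using
    pr_channelLaw (μ := μ) (α := α) (β := β) (κ := κ) (η := η) (· = i) (fun _ => True) E

theorem pr_channelLaw_right_and_input (hκ : ∀ a, ∑ i, κ a i = 1) (j : B') (E : Ω → Prop) :
    pr (channelLaw μ α β κ η) (fun t => t.2.2 = j ∧ E t.1) =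
      ∑ ω, if E ω then μ ω * η (β ω) j else 0 := by
  simpa [pr_true, pr_singleton, hκ] using
    pr_channelLaw (μ := μ) (α := α) (β := β) (κ := κ) (η := η) (fun _ => True) (· = j) E

theorem pr_channelLaw_input (hκ : ∀ a, ∑ i, κ a i = 1) (hη : ∀ b, ∑ j, η b j = 1)
    (E : Ω → Prop) : pr (channelLaw μ α β κ η) (fun t => E t.1) = pr μ E := by
  simpa [pr_true, hκ, hη, pr] using
    pr_channelLaw (μ := μ) (α := α) (β := β) (κ := κ) (η := η) (fun _ => True) (fun _ => True) E

theorem IsProb.channelLaw (hμ : IsProb μ) (hκ : ∀ a, IsProb (κ a)) (hη : ∀ b, IsProb (η b)) :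
    IsProb (channelLaw μ α β κ η) := by
  refine ⟨fun t => mul_nonneg (hμ.1 _) (mul_nonneg ((hκ _).1 _) ((hη _).1 _)), ?_⟩
  rw [← pr_true, pr_channelLaw_input (fun a => (hκ a).2) (fun b => (hη b).2) fun _ => True,
    pr_true, hμ.2]

theorem CondIndep.channelLaw (h : CondIndep μ α β γ) (hκ : ∀ a, ∑ i, κ a i = 1)
    (hη : ∀ b, ∑ j, η b j = 1) :
    CondIndep (channelLaw μ α β κ η) (fun t => t.2.1) (fun t => t.2.2) (fun t => γ t.1) := by
  intro i j c
  rw [pr_channelLaw_outputs_and_input i j (γ · = c), pr_channelLaw_left_and_input hη i (γ · = c),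
    pr_channelLaw_right_and_input hκ j (γ · = c), pr_channelLaw_input hκ hη (γ · = c)]
  exact h.sum_mul_mul_pr (κ · i) (η · j) c

theorem Indep.channelLaw (h : Indep μ α β) (hμ : IsProb μ) (hκ : ∀ a, IsProb (κ a))
    (hη : ∀ b, IsProb (η b)) :
    Indep (channelLaw μ α β κ η) (fun t => t.2.1) (fun t => t.2.2) :=
  (indep_iff_condIndep_const (hμ.channelLaw hκ hη).2).2 <|
    ((indep_iff_condIndep_const hμ.2).1 h).channelLaw (fun a => (hκ a).2) fun b => (hη b).2

theorem condMutualInfo_channelLaw_eq_zero (hμ : IsProb μ) (hκ : ∀ a, IsProb (κ a))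
    (hη : ∀ b, IsProb (η b)) (h : condMutualInfo μ α β γ = 0) :
    condMutualInfo (channelLaw μ α β κ η) (fun t => t.2.1) (fun t => t.2.2)
      (fun t => γ t.1) = 0 :=
  (condMutualInfo_eq_zero_iff (hμ.channelLaw hκ hη).1).2 <|
    ((condMutualInfo_eq_zero_iff hμ.1).1 h).channelLaw (fun a => (hκ a).2) fun b => (hη b).2

theorem CondIndepOrder.channelLaw {k : ℕ} (h : CondIndepOrder μ α β k) (hμ : IsProb μ)
    (hκ : ∀ a, IsProb (κ a)) (hη : ∀ b, IsProb (η b)) :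
    CondIndepOrder (channelLaw μ α β κ η) (fun t => t.2.1) (fun t => t.2.2) k := by
  cases k with
  | zero => exact Indep.channelLaw h hμ hκ hη
  | succ k =>
    obtain ⟨Ω₀, A₀, B₀, iΩ₀, μ₀, α₀, β₀, αs, βs, hμ₀, hjoint, hαs, hβs, hk⟩ := h
    refine ⟨Ω₀ × A' × B', A₀, B₀, inferInstance, _root_.channelLaw μ₀ α₀ β₀ κ η,
      fun t => t.2.1, fun t => t.2.2, fun t => αs t.1, fun t => βs t.1,
      hμ₀.channelLaw hκ hη, fun i j => ?_,
      condMutualInfo_channelLaw_eq_zero hμ₀ hκ hη hαs,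
      condMutualInfo_channelLaw_eq_zero hμ₀ hκ hη hβs,
      CondIndepOrder.congr hk fun a b => ?_⟩
    · rw [pr_channelLaw_outputs, pr_channelLaw_outputs]
      exact sum_mul_eq_of_joint_eq hjoint fun a b => κ a i * η b j
    · exact pr_channelLaw_input (fun a => (hκ a).2) (fun b => (hη b).2)
        fun ω => αs ω = a ∧ βs ω = b

end Channel

section GoodMatrix

variable {m n m' n' : ℕ} {M : Matrix (Fin m) (Fin n) ℝ}
  {A : Matrix (Fin m) (Fin m') ℝ} {B : Matrix (Fin n) (Fin n') ℝ}

theorem IsStochastic.isProb_row (hA : IsStochastic A) (i : Fin m) : IsProb (A i) :=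
  ⟨hA.1 i, hA.2 i⟩

theorem IsJointMatrixOf.isJointProbMatrix {Ω : Type} [Fintype Ω] {μ : Ω → ℝ} {α : Ω → Fin m}
    {β : Ω → Fin n} (hM : IsJointMatrixOf M μ α β) (hμ : IsProb μ) : IsJointProbMatrix M := by
  refine ⟨fun i j => hM i j ▸ pr_nonneg hμ.1, ?_⟩
  calc ∑ i, ∑ j, M i j
      = ∑ x : Fin m × Fin n, pr μ (fun ω => (α ω, β ω) = x) := by
        simp only [Fintype.sum_prod_type, hM _ _, Prod.mk.injEq]
    _ = 1 := by rw [sum_pr fun _ => mem_univ _, hμ.2]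

theorem IsGoodMatrix.isJointProbMatrix (hM : IsGoodMatrix M) : IsJointProbMatrix M := by
  obtain ⟨Ω, iΩ, μ, α, β, k, hμ, hjoint, -⟩ := hM
  exact hjoint.isJointProbMatrix hμ

theorem IsJointMatrixOf.transpose_mul_mul {Ω : Type} [Fintype Ω] {μ : Ω → ℝ} {α : Ω → Fin m}
    {β : Ω → Fin n} (hM : IsJointMatrixOf M μ α β) (A : Matrix (Fin m) (Fin m') ℝ)
    (B : Matrix (Fin n) (Fin n') ℝ) :
    IsJointMatrixOf (A.transpose * M * B) (channelLaw μ α β A B)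
      (fun t => t.2.1) (fun t => t.2.2) := by
  intro i j
  calc (A.transpose * M * B) i j
      = ∑ a, ∑ b, M a b * (A a i * B b j) := by
        simp only [Matrix.mul_apply, Matrix.transpose_apply, sum_mul]
        rw [sum_comm]
        exact sum_congr rfl fun a _ => sum_congr rfl fun b _ => by ring
    _ = ∑ x : Fin m × Fin n, pr μ (fun ω => (α ω, β ω) = x) * (A x.1 i * B x.2 j) := by
        simp only [Fintype.sum_prod_type, hM _ _, Prod.mk.injEq]
    _ = ∑ ω, μ ω * (A (α ω) i * B (β ω) j) :=
        sum_pr_mul (fun _ => mem_univ _) fun x : Fin m × Fin n => A x.1 i * B x.2 j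
    _ = _ := (pr_channelLaw_outputs i j).symm

end GoodMatrix

/-- If `M` is a good `m × n` joint probability matrix, `A` is an
`m × m'` stochastic matrix and `B` is an `n × n'` stochastic matrix, then `A.transposeMB`
is a good `m' × n'` joint probability matrix. -/
theorem isGoodMatrix_transpose_mul_mul {m n m' n' : ℕ}
    (M : Matrix (Fin m) (Fin n) ℝ) (hM : IsGoodMatrix M)
    (A : Matrix (Fin m) (Fin m') ℝ) (hA : IsStochastic A)
    (B : Matrix (Fin n) (Fin n') ℝ) (hB : IsStochastic B) :
    IsJointProbMatrix (A.transpose * M * B) ∧ IsGoodMatrix (A.transpose * M * B) := by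
  obtain ⟨Ω, iΩ, μ, α, β, k, hμ, hjoint, hk⟩ := hM
  have hgood : IsGoodMatrix (A.transpose * M * B) :=
    ⟨Ω × Fin m' × Fin n', inferInstance, channelLaw μ α β A B, fun t => t.2.1, fun t => t.2.2, k,
      hμ.channelLaw hA.isProb_row hB.isProb_row, hjoint.transpose_mul_mul A B,
      hk.channelLaw hμ hA.isProb_row hB.isProb_row⟩
  exact ⟨hgood.isJointProbMatrix, hgood⟩
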